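/- arXiv:2311.12714 — 3 statements merged into one kernel-verified Lean document; each statement's English description precedes it below -/
import Mathlib

section
/- Let p be an odd prime with p > 3, let m be a primitive root modulo p, and define the sequence x : ℕ → ℕ by x k = m^k % p. Then the sequence satisfies, for all k ∈ ℕ, the linear recurrence of order (p-1)/2 + 1 given by (x (k + (p-1)/2 + 1) : ℤ) = x k - x (k+1) + x (k + (p-1)/2). (Existence part of the minimal-lifting-dimension theorem for the Diffie–Hellman cryptosystem: the lifting of dimension (p-1)/2 + 1 using the value-list observables admits an exact linear time-invariant representation, with recurrence coefficient vector α = (1, -1, 0, ..., 0, 1).) -/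
/-!
A primitive root `m` modulo `p` satisfies `m ^ ((p - 1) / 2) = -1`, so residues half a period apart
are negatives of each other. Nonzero opposite residues add up to the modulus, so the sum of the
terms at `k` and `k + (p - 1) / 2` does not depend on `k`; equating it at `k` and at `k + 1` gives
the recurrence.
-/

theorem pow_orderOf_div_two_eq_neg_one {R : Type*} [CommRing R] [NoZeroDivisors R] {x : R}
    (hx : IsOfFinOrder x) (heven : Even (orderOf x)) : x ^ (orderOf x / 2) = -1 :=
  have hprim : IsPrimitiveRoot (x ^ (orderOf x / 2)) 2 :=
    (IsPrimitiveRoot.orderOf x).pow hx.orderOf_pos (Nat.div_two_mul_two_of_even heven).symm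
  hprim.eq_neg_one_of_two_right

theorem val_add_val_neg {n : ℕ} [NeZero n] (a : ZMod n) :
    a.val + (-a).val = if a = 0 then 0 else n := by
  split_ifs with ha
  · simp [ha]
  · rw [ZMod.neg_val, if_neg ha, Nat.add_sub_cancel' a.val_le]

theorem val_add_val_neg_mul_of_isUnit {n : ℕ} [NeZero n] {u : ZMod n} (hu : IsUnit u)
    (a : ZMod n) : (a * u).val + (-(a * u)).val = a.val + (-a).val := by
  simp only [val_add_val_neg, hu.mul_left_eq_zero]

theorem dh_linear_recurrence_exists_general {n m h : ℕ} [NeZero n] (hm : IsUnit (m : ZMod n))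
    (hneg : (m : ZMod n) ^ h = -1) (x₀ k : ℕ) :
    ((x₀ * m ^ (k + h + 1) % n : ℕ) : ℤ)
      = ((x₀ * m ^ k % n : ℕ) : ℤ) - ((x₀ * m ^ (k + 1) % n : ℕ) : ℤ)
        + ((x₀ * m ^ (k + h) % n : ℕ) : ℤ) := by
  have hshift (j : ℕ) : ((x₀ * m ^ (j + h) : ℕ) : ZMod n) = -(x₀ * m ^ j : ℕ) := by
    push_cast
    rw [pow_add, hneg, mul_neg_one, mul_neg]
  have hstep : ((x₀ * m ^ (k + 1) : ℕ) : ZMod n) = (x₀ * m ^ k : ℕ) * m := by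
    push_cast
    rw [pow_succ, mul_assoc]
  have hsum := val_add_val_neg_mul_of_isUnit hm (x₀ * m ^ k : ℕ)
  rw [← hstep, ← hshift, ← hshift, add_right_comm k 1 h] at hsum
  simp only [ZMod.val_natCast] at hsum
  lia

/-- **Existence part of the minimal-lifting-dimension theorem for Diffie–Hellman.**
For `p` an odd prime with `p > 3`, `m` a primitive root modulo `p`, and `x k = m ^ k % p`,
the sequence satisfies the order-`(p-1)/2 + 1` linear recurrence
`x (k + (p-1)/2 + 1) = x k - x (k+1) + x (k + (p-1)/2)` for all `k`,
i.e. the coefficient vector is `α = (1, -1, 0, ..., 0, 1)`. -/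
theorem dh_linear_recurrence_exists (p m : ℕ) (hp : p.Prime) (hp3 : 3 < p)
    (hm : orderOf (m : ZMod p) = p - 1) :
    ∀ k : ℕ, ((m ^ (k + (p - 1) / 2 + 1) % p : ℕ) : ℤ)
      = ((m ^ k % p : ℕ) : ℤ) - ((m ^ (k + 1) % p : ℕ) : ℤ)
        + ((m ^ (k + (p - 1) / 2) % p : ℕ) : ℤ) := by
  have : Fact p.Prime := ⟨hp⟩
  have hfin : IsOfFinOrder (m : ZMod p) := orderOf_pos_iff.mp (by lia)
  have heven : Even (orderOf (m : ZMod p)) := hm ▸ hp.even_sub_one (by lia)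
  have hneg : (m : ZMod p) ^ ((p - 1) / 2) = -1 := hm ▸ pow_orderOf_div_two_eq_neg_one hfin heven
  simpa only [one_mul] using dh_linear_recurrence_exists_general hfin.isUnit hneg 1
end

section
/- Let p be an odd prime with p > 3, let m be a primitive root modulo p, and define the sequence x : ℕ → ℕ by x k = m^k % p. Then there exists no vector α : Fin ((p-1)/2) → ℝ such that for all k ∈ ℕ, (x (k + (p-1)/2) : ℝ) = Σ_{j=0}^{(p-1)/2 - 1} α_j · x (k + j). (Minimality part of the minimal-lifting-dimension theorem: no exact linear time-invariant representation of the Diffie–Hellman dynamics exists with value-list observables of dimension (p-1)/2 or smaller.) -/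
/-!
Let `n` be half the order of `m`. If a `T`-periodic sequence `u` satisfies a linear recurrence, so
does `k ↦ ∑ i < T, ζ ^ i * u (k + i)` for every `T`-th root of unity `ζ`, and this is the geometric
sequence of ratio `ζ⁻¹` scaled by the discrete Fourier coefficient `∑ i < T, ζ ^ i * u i`. Hence
every nonzero coefficient makes `ζ⁻¹` a root of the characteristic polynomial. For the powers of a
primitive root these coefficients are the sums `∑ a, χ a * a` over the Dirichlet characters `χ`.
The trivial character gives the root `1`, and the odd characters give all the roots of `X ^ n + 1`,
so the characteristic polynomial has degree greater than `n`.

That `∑ a, χ a * a ≠ 0` for odd `χ` is `L(χ, 0) ≠ 0`, which the functional equation reduces to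
`L(χ⁻¹, 1) ≠ 0`. The two are linked by `ζ(0, a) = 1 / 2 - a`. To obtain this, write
`ζ(s, a) - ζ(s) - (1 - a)` for `re s > 1` as the sum over `k` of the errors made in extrapolating
`t ↦ t ^ (-s)` linearly from `k + 1` and `k + 2` to `k + a`. These are `O(k ^ (-re s - 2))`, so the
identity continues to `s = 0`, where every error vanishes.
-/

lemma norm_sub_sub_smul_deriv_le {E : Type*} [NormedAddCommGroup E] [NormedSpace ℝ E]
    {f f' f'' : ℝ → E} {x y C : ℝ} (hxy : x ≤ y)
    (hf : ∀ t ∈ Set.Icc x y, HasDerivAt f (f' t) t)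
    (hf' : ∀ t ∈ Set.Icc x y, HasDerivAt f' (f'' t) t) (hC : ∀ t ∈ Set.Icc x y, ‖f'' t‖ ≤ C) :
    ‖f y - f x - (y - x) • f' x‖ ≤ C * (y - x) ^ 2 := by
  have hC0 : 0 ≤ C := (norm_nonneg _).trans (hC x (Set.left_mem_Icc.2 hxy))
  have hderiv : ∀ t ∈ Set.Icc x y, ‖f' t - f' x‖ ≤ C * (y - x) := fun t ht ↦
    calc ‖f' t - f' x‖ ≤ C * (t - x) :=
          norm_image_sub_le_of_norm_deriv_le_segment'
            (fun u hu ↦ (hf' u hu).hasDerivWithinAt)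
            (fun u hu ↦ hC u (Set.Ico_subset_Icc_self hu)) t ht
      _ ≤ C * (y - x) := by gcongr; exact ht.2
  have h := norm_image_sub_le_of_norm_deriv_le_segment' (f := fun t ↦ f t - (t - x) • f' x)
    (fun t ht ↦ ((hf t ht).sub
      (((hasDerivAt_id t).sub_const x).smul_const (f' x))).hasDerivWithinAt)
    (fun t ht ↦ by simpa using hderiv t (Set.Ico_subset_Icc_self ht)) y (Set.right_mem_Icc.2 hxy)
  calc ‖f y - f x - (y - x) • f' x‖ ≤ C * (y - x) * (y - x) := by
        simpa [sub_right_comm] using h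
    _ = C * (y - x) ^ 2 := by ring

lemma hasDerivAt_ofReal_cpow_of_pos {x : ℝ} (hx : 0 < x) (r : ℂ) :
    HasDerivAt (fun t : ℝ ↦ (t : ℂ) ^ r) (r * (x : ℂ) ^ (r - 1)) x := by
  simpa using ((hasDerivAt_id (x : ℂ)).cpow_const (c := r) (by simp [hx])).comp_ofReal

lemma norm_cpow_sub_sub_mul_cpow_le {x y : ℝ} (hx : 0 < x) (hxy : x ≤ y) {r : ℂ}
    (hr : r.re ≤ 2) :
    ‖(y : ℂ) ^ r - (x : ℂ) ^ r - (y - x) * (r * (x : ℂ) ^ (r - 1))‖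
      ≤ ‖r‖ * ‖r - 1‖ * x ^ (r.re - 2) * (y - x) ^ 2 := by
  have h := norm_sub_sub_smul_deriv_le (C := ‖r‖ * ‖r - 1‖ * x ^ (r.re - 2)) hxy
    (fun t ht ↦ hasDerivAt_ofReal_cpow_of_pos (hx.trans_le ht.1) r)
    (fun t ht ↦ (hasDerivAt_ofReal_cpow_of_pos (hx.trans_le ht.1) (r - 1)).const_mul r)
    (fun t ht ↦ ?_)
  · simpa [Complex.real_smul] using h
  · have hexp : (r - 1 - 1).re = r.re - 2 := by
      simp only [Complex.sub_re, Complex.one_re]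
      ring
    rw [norm_mul, norm_mul, Complex.norm_cpow_eq_rpow_re_of_pos (hx.trans_le ht.1), hexp,
      ← mul_assoc]
    exact mul_le_mul_of_nonneg_left (Real.rpow_le_rpow_of_nonpos hx ht.1 (by linarith))
      (by positivity)

/-- The error at `n + a` of the linear extrapolation of `t ↦ t ^ (-s)` from `n + 1` and `n + 2`.
Summed over `n`, it expresses `ζ(s, a) - ζ(s)` by a series converging for `re s > -1`. -/
noncomputable def extrapolationError (a : ℝ) (n : ℕ) (s : ℂ) : ℂ :=
  (n + a : ℂ) ^ (-s) - (n + 1 : ℂ) ^ (-s) - (1 - a) * ((n + 1 : ℂ) ^ (-s) - (n + 2 : ℂ) ^ (-s))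

lemma extrapolationError_apply_zero (a : ℝ) (n : ℕ) : extrapolationError a n 0 = 0 := by
  simp [extrapolationError]

lemma differentiable_extrapolationError {a : ℝ} (ha : 0 < a) (n : ℕ) :
    Differentiable ℂ (extrapolationError a n) := by
  have hpow {b : ℝ} (hb : 0 < b) : Differentiable ℂ fun s : ℂ ↦ (n + b : ℂ) ^ (-s) :=
    differentiable_id.neg.const_cpow (.inl (by norm_cast; positivity))
  have h1 := hpow one_pos
  have h2 := hpow two_pos
  push_cast at h1 h2
  exact ((hpow ha).sub h1).sub ((h1.sub h2).const_mul _)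

open HurwitzZeta in
lemma hasSum_extrapolationError {a : ℝ} (ha : a ∈ Set.Icc 0 1) {s : ℂ} (hs : 1 < s.re) :
    HasSum (fun n ↦ extrapolationError a n s) (hurwitzZeta a s - hurwitzZeta 0 s - (1 - a)) := by
  have hsum {b : ℝ} (hb : b ∈ Set.Icc 0 1) :
      HasSum (fun n : ℕ ↦ (n + b : ℂ) ^ (-s)) (hurwitzZeta b s) := by
    simpa only [Complex.cpow_neg, one_div] using hasSum_hurwitzZeta_of_one_lt_re hb hs
  have h1 : HasSum (fun n : ℕ ↦ (n + 1 : ℂ) ^ (-s)) (hurwitzZeta 0 s) := by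
    simpa [AddCircle.coe_period] using hsum (Set.right_mem_Icc.2 zero_le_one)
  have h2 : HasSum (fun n : ℕ ↦ (n + 2 : ℂ) ^ (-s)) (hurwitzZeta 0 s - 1) := by
    simpa [add_assoc, one_add_one_eq_two] using (hasSum_nat_add_iff' 1).2 h1
  simpa [extrapolationError] using ((hsum ha).sub h1).sub ((h1.sub h2).mul_left (1 - a : ℂ))

/-- Expanding at `n + a`, the Taylor terms of degree at most one cancel. -/
lemma norm_extrapolationError_le {a : ℝ} (ha : a ∈ Set.Ioc 0 1) (n : ℕ) {s : ℂ}
    (hs : -2 ≤ s.re) :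
    ‖extrapolationError a n s‖ ≤ 6 * (‖s‖ * ‖s + 1‖ * (n + a) ^ (-s.re - 2)) := by
  obtain ⟨ha0, ha1⟩ := ha
  set K : ℝ := ‖s‖ * ‖s + 1‖ * (n + a) ^ (-s.re - 2) with hK
  have hx : 0 < n + a := by positivity
  have : 0 ≤ K := by positivity
  let R (h : ℝ) : ℂ := ((n + a + h : ℝ) : ℂ) ^ (-s) - ((n + a : ℝ) : ℂ) ^ (-s)
    - h * (-s * ((n + a : ℝ) : ℂ) ^ (-s - 1))
  have hR {h : ℝ} (hh : 0 ≤ h) : ‖R h‖ ≤ K * h ^ 2 := by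
    have hnorm : ‖-s - 1‖ = ‖s + 1‖ := by rw [← norm_neg]; ring_nf
    simpa [R, hK, hnorm] using norm_cpow_sub_sub_mul_cpow_le hx (le_add_of_nonneg_right hh)
      (r := -s) (by rw [Complex.neg_re]; linarith)
  have hdecomp : extrapolationError a n s =
      ((1 - a : ℝ) : ℂ) * R (2 - a) - ((2 - a : ℝ) : ℂ) * R (1 - a) := by
    simp only [extrapolationError, R, show n + a + (1 - a) = (n : ℝ) + 1 by ring,
      show n + a + (2 - a) = (n : ℝ) + 2 by ring]
    push_cast
    ring
  have h1 : 0 ≤ 1 - a := by linarith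
  have h2 : 0 ≤ 2 - a := by linarith
  calc ‖extrapolationError a n s‖
      ≤ (1 - a) * ‖R (2 - a)‖ + (2 - a) * ‖R (1 - a)‖ := by
        rw [hdecomp]
        refine (norm_sub_le _ _).trans_eq ?_
        rw [norm_mul, norm_mul, Complex.norm_of_nonneg h1, Complex.norm_of_nonneg h2]
    _ ≤ 1 * (K * 2 ^ 2) + 2 * (K * 1 ^ 2) := by
        gcongr
        · linarith
        · exact (hR h2).trans (by gcongr; linarith)
        · linarith
        · exact (hR h1).trans (by gcongr; linarith)
    _ = 6 * K := by ring

lemma norm_extrapolationError_le_of_mem_ball {a : ℝ} (ha : a ∈ Set.Ioc 0 1) (n : ℕ) {s : ℂ}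
    (hs : s ∈ Metric.ball (1 : ℂ) (3 / 2)) :
    ‖extrapolationError a n s‖
      ≤ 6 * (3 * 4 * a ^ (-5 : ℝ)) * ((n + 1 : ℕ) : ℝ) ^ (-(3 / 2) : ℝ) := by
  have hs1 : ‖s - 1‖ < 3 / 2 := by simpa [dist_eq_norm] using hs
  have hre := abs_lt.1 ((Complex.abs_re_le_norm (s - 1)).trans_lt hs1)
  rw [Complex.sub_re, Complex.one_re] at hre
  have hs3 : ‖s‖ ≤ 3 := by
    calc ‖s‖ ≤ ‖s - 1‖ + ‖(1 : ℂ)‖ := norm_le_norm_sub_add s 1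
      _ ≤ 3 := by rw [norm_one]; linarith
  have hs4 : ‖s + 1‖ ≤ 4 := by
    calc ‖s + 1‖ ≤ ‖s‖ + ‖(1 : ℂ)‖ := norm_add_le s 1
      _ ≤ 4 := by rw [norm_one]; linarith
  have hpow : (n + a) ^ (-s.re - 2) ≤ a ^ (-5 : ℝ) * ((n + 1 : ℕ) : ℝ) ^ (-(3 / 2) : ℝ) := by
    have hle : a * (n + 1 : ℕ) ≤ n + a := by
      push_cast
      nlinarith [ha.2, (n.cast_nonneg : (0 : ℝ) ≤ n)]
    have hn : (1 : ℝ) ≤ (n + 1 : ℕ) := by simp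
    calc (n + a) ^ (-s.re - 2) ≤ (a * (n + 1 : ℕ)) ^ (-s.re - 2) :=
          Real.rpow_le_rpow_of_nonpos (mul_pos ha.1 (by positivity)) hle (by linarith)
      _ = a ^ (-s.re - 2) * ((n + 1 : ℕ) : ℝ) ^ (-s.re - 2) :=
          Real.mul_rpow ha.1.le (by positivity)
      _ ≤ a ^ (-5 : ℝ) * ((n + 1 : ℕ) : ℝ) ^ (-(3 / 2) : ℝ) := by
          have := ha.1
          gcongr ?_ * ?_
          · exact Real.rpow_le_rpow_of_exponent_ge ha.1 ha.2 (by linarith)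
          · exact Real.rpow_le_rpow_of_exponent_le hn (by linarith)
  calc ‖extrapolationError a n s‖ ≤ 6 * (‖s‖ * ‖s + 1‖ * (n + a) ^ (-s.re - 2)) :=
        norm_extrapolationError_le ha n (by linarith)
    _ ≤ 6 * (3 * 4 * (a ^ (-5 : ℝ) * ((n + 1 : ℕ) : ℝ) ^ (-(3 / 2) : ℝ))) := by
        have := ha.1
        gcongr
    _ = _ := by ring

open HurwitzZeta in
lemma hurwitzZeta_apply_zero {a : ℝ} (ha : a ∈ Set.Ioc 0 1) :
    hurwitzZeta a 0 = 1 / 2 - a := by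
  set U := Metric.ball (1 : ℂ) (3 / 2)
  have hsummable : Summable fun n : ℕ ↦
      6 * (3 * 4 * a ^ (-5 : ℝ)) * ((n + 1 : ℕ) : ℝ) ^ (-(3 / 2) : ℝ) :=
    ((summable_nat_add_iff 1).2 (Real.summable_nat_rpow.2 (by norm_num))).mul_left _
  have htsum : AnalyticOnNhd ℂ (fun s ↦ ∑' n, extrapolationError a n s) U :=
    (Complex.differentiableOn_tsum_of_summable_norm hsummable
      (fun n ↦ (differentiable_extrapolationError ha.1 n).differentiableOn) Metric.isOpen_ball
      fun n s ↦ norm_extrapolationError_le_of_mem_ball ha n).analyticOnNhd Metric.isOpen_ball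
  have hzeta : AnalyticOnNhd ℂ (fun s ↦ hurwitzZeta a s - hurwitzZeta 0 s - (1 - a)) U :=
    ((differentiable_hurwitzZeta_sub_hurwitzZeta a 0).sub_const _).differentiableOn.analyticOnNhd
      Metric.isOpen_ball
  have heq : (fun s ↦ hurwitzZeta a s - hurwitzZeta 0 s - (1 - a))
      =ᶠ[nhds 2] fun s ↦ ∑' n, extrapolationError a n s := by
    filter_upwards [(isOpen_lt continuous_const Complex.continuous_re).mem_nhds
      (show (1 : ℝ) < (2 : ℂ).re by norm_num)] with s hs
    exact (hasSum_extrapolationError (Set.Ioc_subset_Icc_self ha) hs).tsum_eq.symm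
  have h0 : hurwitzZeta a 0 - hurwitzZeta 0 0 - (1 - a) = 0 := by
    simpa [extrapolationError_apply_zero] using hzeta.eqOn_of_preconnected_of_eventuallyEq htsum
      (convex_ball _ _).isPreconnected (by norm_num [U, dist_eq_norm]) heq
      (show (0 : ℂ) ∈ U by norm_num [U])
  rw [hurwitzZeta_zero, riemannZeta_zero] at h0
  linear_combination h0

lemma LFunction_apply_zero_of_odd {N : ℕ} [NeZero N] {Φ : ZMod N → ℂ} (hΦ : Φ.Odd) :
    ZMod.LFunction Φ 0 = -(∑ a, Φ a * a.val) / N := by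
  have hterm (a : ZMod N) : Φ a * HurwitzZeta.hurwitzZeta (ZMod.toAddCircle a) 0
      = Φ a * (1 / 2) - Φ a * a.val / N := by
    rcases eq_or_ne a 0 with rfl | ha
    · simp [hΦ.map_zero]
    · have hval : (a.val / N : ℝ) ∈ Set.Ioc 0 1 :=
        ⟨by have := ZMod.val_pos.2 ha; have := NeZero.pos N; positivity,
          div_le_one_of_le₀ (by exact_mod_cast a.val_lt.le) (by positivity)⟩
      rw [ZMod.toAddCircle_apply, hurwitzZeta_apply_zero hval]
      push_cast
      ring
  rw [ZMod.LFunction, neg_zero, Complex.cpow_zero, one_mul, Finset.sum_congr rfl fun a _ ↦ hterm a,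
    Finset.sum_sub_distrib, ← Finset.sum_mul, hΦ.sum_eq_zero, ← Finset.sum_div]
  ring

lemma dirichletCharacter_ne_one_of_odd {S : Type*} [CommRing S] [NeZero (2 : S)] {N : ℕ}
    {χ : DirichletCharacter S N} (hχ : χ.Odd) : χ ≠ 1 := by
  rintro rfl
  have h : (1 : S) = -1 := by
    rw [← (show (1 : DirichletCharacter S N) (-1) = -1 from hχ), MulChar.one_apply isUnit_one.neg]
  exact two_ne_zero (α := S) (by linear_combination h)

lemma LFunction_zero_ne_zero_of_isPrimitive_of_odd {N : ℕ} [NeZero N] {χ : DirichletCharacter ℂ N}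
    (hprim : χ.IsPrimitive) (hχ : χ.Odd) : χ.LFunction 0 ≠ 0 := by
  have hne : χ ≠ 1 := dirichletCharacter_ne_one_of_odd hχ
  have hN : N ≠ 1 := by
    rintro rfl
    exact hne (χ.level_one' rfl)
  have hinv : χ⁻¹.IsPrimitive := χ.conductor_inv.trans hprim
  have hone : χ⁻¹.completedLFunction 1 ≠ 0 := fun h ↦
    χ⁻¹.LFunction_apply_one_ne_zero (inv_ne_one.2 hne) <| by
      rw [χ⁻¹.LFunction_eq_completed_div_gammaFactor 1 (.inl one_ne_zero), h, zero_div]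
  have hzero : χ.completedLFunction 0 ≠ 0 := fun h ↦
    hone <| by simpa [h] using hinv.completedLFunction_one_sub 0
  rwa [χ.LFunction_eq_completed_div_gammaFactor 0 (.inr hN), hχ.gammaFactor_def, zero_add,
    Complex.Gammaℝ_one, div_one]

instance neZero_conductor {R : Type*} [CommMonoidWithZero R] {N : ℕ} [NeZero N]
    (χ : DirichletCharacter R N) : NeZero χ.conductor := ⟨χ.conductor_ne_zero⟩

/-- At level `q ^ k` only the Euler factor at `q` can differ, and it is `1` for both characters
because `q` divides the conductor. -/
lemma LFunction_primitiveCharacter_of_isPrimePow {N : ℕ} [NeZero N] (hN : IsPrimePow N)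
    {χ : DirichletCharacter ℂ N} (hχ : χ ≠ 1) (s : ℂ) :
    χ.primitiveCharacter.LFunction s = χ.LFunction s := by
  obtain ⟨q, k, hq, hk, rfl⟩ := (isPrimePow_nat_iff N).1 hN
  have hdvd : q ∣ χ.conductor := by
    obtain ⟨j, -, hj⟩ := (Nat.dvd_prime_pow hq).1 χ.conductor_dvd_level
    rw [hj]
    refine dvd_pow_self q fun hj0 ↦ hχ (χ.eq_one_iff_conductor_eq_one.2 ?_)
    rw [hj, hj0, pow_zero]
  have hval : χ.primitiveCharacter q = 0 :=
    MulChar.map_nonunit _ fun h ↦ (ZMod.isUnit_prime_iff_not_dvd hq).1 h hdvd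
  have hprim : χ.primitiveCharacter ≠ 1 := by
    rwa [Ne, ← DirichletCharacter.changeLevel_eq_one_iff χ.conductor_dvd_level,
      χ.changeLevel_primitiveCharacter]
  conv_rhs => rw [← χ.changeLevel_primitiveCharacter]
  rw [DirichletCharacter.LFunction_changeLevel _ _ (.inl hprim),
    Nat.primeFactors_prime_pow hk.ne' hq, Finset.prod_singleton, hval, zero_mul, sub_zero, mul_one]

lemma odd_primitiveCharacter {S : Type*} [CommRing S] {N : ℕ}
    {χ : DirichletCharacter S N} (hχ : χ.Odd) : χ.primitiveCharacter.Odd := by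
  have h := χ.primitiveCharacter_apply_of_isCoprime (a := -1) isCoprime_one_left.neg_left
  push_cast at h
  exact h.trans hχ

lemma LFunction_zero_ne_zero_of_odd {N : ℕ} [NeZero N] (hN : IsPrimePow N)
    {χ : DirichletCharacter ℂ N} (hχ : χ.Odd) : χ.LFunction 0 ≠ 0 := by
  rw [← LFunction_primitiveCharacter_of_isPrimePow hN (dirichletCharacter_ne_one_of_odd hχ)]
  exact LFunction_zero_ne_zero_of_isPrimitive_of_odd χ.primitiveCharacter_isPrimitive
    (odd_primitiveCharacter hχ)

lemma sum_mul_val_ne_zero_of_odd {N : ℕ} [NeZero N] (hN : IsPrimePow N)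
    {χ : DirichletCharacter ℂ N} (hχ : χ.Odd) : ∑ a, χ a * a.val ≠ 0 := fun h ↦
  LFunction_zero_ne_zero_of_odd hN hχ <| by
    rw [DirichletCharacter.LFunction, LFunction_apply_zero_of_odd hχ.to_fun, h, neg_zero, zero_div]

open Polynomial in
lemma X_pow_sub_C_dvd_of_forall_isRoot {K : Type*} [Field K] [IsAlgClosed K] {n : ℕ}
    (hn : (n : K) ≠ 0) {c : K} (hc : c ≠ 0) {P : K[X]} (hP : ∀ w, w ^ n = c → P.IsRoot w) :
    X ^ n - C c ∣ P := by
  rcases eq_or_ne P 0 with rfl | hP0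
  · exact dvd_zero _
  have hsep := separable_X_pow_sub_C c hn hc
  rw [IsAlgClosed.dvd_iff_roots_le_roots hsep.ne_zero hP0,
    Multiset.le_iff_subset (nodup_roots hsep)]
  intro w hw
  refine (mem_roots hP0).2 (hP w (sub_eq_zero.1 ?_))
  simpa using (mem_roots'.1 hw).2

open Polynomial in
lemma natDegree_lt_natDegree_of_dvd_of_isRoot {R : Type*} [CommSemiring R] [NoZeroDivisors R]
    {P Q : R[X]} (hP0 : P ≠ 0) (hQP : Q ∣ P) {a : R} (hP : P.IsRoot a) (hQ : ¬ Q.IsRoot a) :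
    Q.natDegree < P.natDegree := by
  obtain ⟨S, rfl⟩ := hQP
  have hS : S.IsRoot a := (root_mul.1 hP).resolve_left hQ
  have hS0 := right_ne_zero_of_mul hP0
  rw [natDegree_mul (left_ne_zero_of_mul hP0) hS0]
  exact Nat.lt_add_of_pos_right (natDegree_pos_iff_degree_pos.2 (degree_pos_of_root hS0 hS))

lemma sum_range_add_of_periodic {M : Type*} [AddCommMonoid M] {f : ℕ → M} {T : ℕ}
    (hf : Function.Periodic f T) (k : ℕ) :
    ∑ i ∈ Finset.range T, f (k + i) = ∑ i ∈ Finset.range T, f i :=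
  calc ∑ i ∈ Finset.range T, f (k + i)
      = ∑ i ∈ Finset.Ico k (k + T), f (i % T) := by
        rw [Finset.sum_Ico_eq_sum_range, Nat.add_sub_cancel_left]
        simp only [hf.map_mod_nat]
    _ = ∑ i ∈ (Finset.Ico k (k + T)).image (· % T), f i :=
        (Finset.sum_image (Nat.mod_injOn_Ico k T)).symm
    _ = ∑ i ∈ Finset.range T, f i := by rw [Nat.image_Ico_mod]

lemma sum_units_pow_mul_add_of_periodic {R : Type*} [CommSemiring R] {u : ℕ → R} {T : ℕ}
    (hu : Function.Periodic u T) {ζ : Rˣ} (hζ : ζ ^ T = 1) (k : ℕ) :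
    ∑ i ∈ Finset.range T, (ζ : R) ^ i * u (k + i)
      = (∑ i ∈ Finset.range T, (ζ : R) ^ i * u i) * (↑ζ⁻¹ : R) ^ k := by
  have hper : Function.Periodic (fun i ↦ (ζ : R) ^ i * u i) T := fun i ↦ by
    simp only [pow_add, ← Units.val_pow_eq_pow_val, hζ, Units.val_one, mul_one, hu i]
  rw [← sum_range_add_of_periodic hper k, Finset.sum_mul]
  refine Finset.sum_congr rfl fun i _ ↦ ?_
  calc (ζ : R) ^ i * u (k + i) = ((ζ : R) * ↑ζ⁻¹) ^ k * (ζ : R) ^ i * u (k + i) := by simp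
    _ = (ζ : R) ^ (k + i) * u (k + i) * (↑ζ⁻¹ : R) ^ k := by ring

lemma isRoot_charPoly_of_periodic {R : Type*} [CommRing R] [IsDomain R] {E : LinearRecurrence R}
    {u : ℕ → R} (hE : E.IsSolution u) {T : ℕ} (hu : Function.Periodic u T) {ζ : Rˣ}
    (hζ : ζ ^ T = 1) (hsum : ∑ i ∈ Finset.range T, (ζ : R) ^ i * u i ≠ 0) :
    E.charPoly.IsRoot (↑ζ⁻¹ : R) := by
  refine (E.geom_sol_iff_root_charPoly _).1 fun k ↦ mul_left_cancel₀ hsum ?_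
  set S := ∑ i ∈ Finset.range T, (ζ : R) ^ i * u i
  have hshift (l : ℕ) : S * (↑ζ⁻¹ : R) ^ l = ∑ i ∈ Finset.range T, (ζ : R) ^ i * u (l + i) :=
    (sum_units_pow_mul_add_of_periodic hu hζ l).symm
  calc S * (↑ζ⁻¹ : R) ^ (k + E.order)
      = ∑ i ∈ Finset.range T, (ζ : R) ^ i * ∑ j, E.coeffs j * u (k + j + i) := by
        simp only [hshift, add_right_comm k, hE _]
    _ = ∑ j, E.coeffs j * ∑ i ∈ Finset.range T, (ζ : R) ^ i * u (k + j + i) := by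
        simp only [Finset.mul_sum]
        rw [Finset.sum_comm]
        simp only [mul_left_comm]
    _ = S * ∑ j, E.coeffs j * (↑ζ⁻¹ : R) ^ (k + j) := by
        simp only [← hshift, Finset.mul_sum, mul_left_comm]

lemma isRoot_charPoly_one_of_periodic {R : Type*} [CommRing R] [IsDomain R] [CharZero R]
    {E : LinearRecurrence R} {u : ℕ → ℕ} (hE : E.IsSolution fun k ↦ (u k : R)) {T : ℕ}
    (hT : 0 < T) (hu : Function.Periodic u T) (hu0 : u 0 ≠ 0) : E.charPoly.IsRoot 1 := by
  have hsum : ∑ i ∈ Finset.range T, u i ≠ 0 := fun h ↦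
    hu0 (Finset.sum_eq_zero_iff.1 h 0 (Finset.mem_range.2 hT))
  simpa using isRoot_charPoly_of_periodic hE (hu.comp (Nat.cast : ℕ → R)) (one_pow T)
    (by simpa using mod_cast hsum)

lemma mem_zpowers_of_orderOf_eq_card {G : Type*} [Group G] [Finite G] {g : G}
    (hg : orderOf g = Nat.card G) (x : G) : x ∈ Subgroup.zpowers g := by
  rw [(Subgroup.zpowers g).eq_top_of_card_eq ((Nat.card_zpowers g).trans hg)]
  exact Subgroup.mem_top x

lemma pow_orderOf_div_two_eq {G : Type*} [Group G] {g x : G} (hx : x ∈ Subgroup.zpowers g)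
    (hx1 : x ≠ 1) (hx2 : x ^ 2 = 1) : g ^ (orderOf g / 2) = x := by
  classical
  have hg : IsOfFinOrder g := by
    obtain ⟨i, rfl⟩ := hx
    refine isOfFinOrder_iff_zpow_eq_one.2 ⟨i * 2, fun hi ↦ hx1 ?_, ?_⟩
    · simp [show i = 0 by lia]
    · rw [zpow_mul]
      exact_mod_cast hx2
  obtain ⟨i, hi, rfl⟩ := Finset.mem_image.1 (hg.mem_zpowers_iff_mem_range_orderOf.1 hx)
  rw [← pow_mul] at hx2
  obtain ⟨c, hc⟩ := orderOf_dvd_of_pow_eq_one hx2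
  rw [Finset.mem_range] at hi
  have hi0 : i ≠ 0 := fun h ↦ hx1 (by rw [h, pow_zero])
  have hc1 : c = 1 := by
    rcases c with _ | _ | c
    · lia
    · rfl
    · nlinarith
  rw [Nat.div_eq_of_eq_mul_left two_pos (by rw [hc, hc1, mul_one])]

lemma periodic_comp_pow_orderOf {G α : Type*} [Monoid G] (f : G → α) (g : G) :
    Function.Periodic (fun k ↦ f (g ^ k)) (orderOf g) := fun k ↦ by
  simp only [pow_add, pow_orderOf_eq_one, mul_one]

lemma sum_mulChar_mul_eq_sum_range {R R' : Type*} [CommMonoid R] [Fintype R] [CommSemiring R']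
    {g : Rˣ} (hg : ∀ u, u ∈ Subgroup.zpowers g) (χ : MulChar R R') (f : R → R') :
    ∑ a, χ a * f a = ∑ i ∈ Finset.range (orderOf g), χ g ^ i * f (g ^ i) := by
  classical
  refine (Finset.sum_of_injOn (fun i ↦ (g : R) ^ i) ?_ (by simp) (fun a _ ha ↦ ?_)
    fun i _ ↦ by rw [map_pow]).symm
  · rw [Finset.coe_range, ← orderOf_units]
    exact pow_injOn_Iio_orderOf
  · rw [χ.map_nonunit, zero_mul]
    rintro ⟨u, rfl⟩
    obtain ⟨i, hi, rfl⟩ := Finset.mem_image.1 (mem_zpowers_iff_mem_range_orderOf.1 (hg u))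
    exact ha ⟨i, hi, by simp⟩

lemma isRoot_charPoly_mulChar_inv {R R' : Type*} [CommMonoid R] [Fintype R] [CommRing R']
    [IsDomain R'] {g : Rˣ} (hg : ∀ u, u ∈ Subgroup.zpowers g) {f : R → R'}
    {E : LinearRecurrence R'} (hE : E.IsSolution fun k ↦ f (g ^ k)) {χ : MulChar R R'}
    (hχ : ∑ a, χ a * f a ≠ 0) : E.charPoly.IsRoot (χ ↑g⁻¹) := by
  have hper : Function.Periodic (fun k ↦ f (g ^ k)) (orderOf g) := by
    simpa only [orderOf_units] using periodic_comp_pow_orderOf f (g : R)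
  rw [sum_mulChar_mul_eq_sum_range hg, ← MulChar.coe_toUnitHom] at hχ
  rw [← MulChar.coe_toUnitHom, map_inv]
  exact isRoot_charPoly_of_periodic hE hper (by rw [← map_pow, pow_orderOf_eq_one, map_one]) hχ

lemma pow_totient_div_two_eq_neg_one {N : ℕ} (hN : 2 < N) {g : (ZMod N)ˣ}
    (hg : ∀ u, u ∈ Subgroup.zpowers g) : g ^ (N.totient / 2) = -1 := by
  have : Fact (2 < N) := ⟨hN⟩
  have : NeZero N := ⟨by lia⟩
  have hne : (-1 : (ZMod N)ˣ) ≠ 1 := fun h ↦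
    ZMod.neg_one_ne_one (by simpa using congrArg Units.val h)
  rw [← ZMod.card_units_eq_totient, ← Nat.card_eq_fintype_card,
    ← orderOf_eq_card_of_forall_mem_zpowers hg]
  exact pow_orderOf_div_two_eq (hg _) hne neg_one_sq

lemma totient_div_two_ne_zero {N : ℕ} (hN : 2 < N) : N.totient / 2 ≠ 0 :=
  (Nat.div_pos (Nat.le_of_dvd (Nat.totient_pos.2 (by lia)) (Nat.totient_even hN).two_dvd)
    two_pos).ne'

lemma exists_odd_dirichletCharacter_apply_eq {S : Type*} [CommRing S] {N : ℕ} (hN : 2 < N)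
    {g : (ZMod N)ˣ} (hg : ∀ u, u ∈ Subgroup.zpowers g) {w : S} (hw : w ^ (N.totient / 2) = -1) :
    ∃ χ : DirichletCharacter S N, χ.Odd ∧ χ g = w := by
  have : NeZero N := ⟨by lia⟩
  have hn : N.totient / 2 * 2 = N.totient := Nat.div_mul_cancel (Nat.totient_even hN).two_dvd
  obtain ⟨ζ, rfl⟩ : IsUnit w :=
    (isUnit_pow_iff (totient_div_two_ne_zero hN)).1 (hw ▸ isUnit_one.neg)
  have hζ : ζ ∈ rootsOfUnity (Fintype.card (ZMod N)ˣ) S := by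
    rw [mem_rootsOfUnity', ZMod.card_units_eq_totient, ← hn, pow_mul, hw, neg_one_sq]
  have hspec := MulChar.ofRootOfUnity_spec hζ hg
  refine ⟨MulChar.ofRootOfUnity hζ hg, ?_, hspec⟩
  rw [DirichletCharacter.Odd, ← hw, ← hspec, ← map_pow, ← Units.val_pow_eq_pow_val,
    pow_totient_div_two_eq_neg_one hN hg, Units.val_neg, Units.val_one]

lemma isRoot_charPoly_of_pow_eq_neg_one {N : ℕ} [NeZero N] (hN : IsPrimePow N) (hN2 : 2 < N)
    {g : (ZMod N)ˣ} (hg : ∀ u, u ∈ Subgroup.zpowers g) {E : LinearRecurrence ℂ}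
    (hE : E.IsSolution fun k ↦ (((g : ZMod N) ^ k).val : ℂ)) {w : ℂ}
    (hw : w ^ (N.totient / 2) = -1) : E.charPoly.IsRoot w := by
  obtain ⟨χ, hodd, rfl⟩ := exists_odd_dirichletCharacter_apply_eq hN2 (g := g⁻¹)
    (by simpa using hg) hw
  exact isRoot_charPoly_mulChar_inv hg hE (sum_mul_val_ne_zero_of_odd hN hodd)

open Polynomial in
theorem dh_no_smaller_linear_recurrence_general {N m : ℕ} (hN : IsPrimePow N) (hN2 : 2 < N)
    (hm : orderOf (m : ZMod N) = N.totient) {E : LinearRecurrence ℂ}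
    (hE : E.IsSolution fun k ↦ ((m ^ k % N : ℕ) : ℂ)) : N.totient / 2 < E.order := by
  have : NeZero N := ⟨by lia⟩
  have hpos : 0 < orderOf (m : ZMod N) := hm ▸ Nat.totient_pos.2 (NeZero.pos N)
  have hval (k : ℕ) : m ^ k % N = ((m : ZMod N) ^ k).val := by
    rw [← Nat.cast_pow, ZMod.val_natCast]
  simp only [hval] at hE
  have hone : E.charPoly.IsRoot 1 :=
    isRoot_charPoly_one_of_periodic hE hpos (periodic_comp_pow_orderOf ZMod.val (m : ZMod N))
      (by rw [← hval, pow_zero, Nat.mod_eq_of_lt (one_lt_two.trans hN2)]; exact one_ne_zero)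
  have hdvd : X ^ (N.totient / 2) - C (-1) ∣ E.charPoly := by
    obtain ⟨g, hg⟩ := (orderOf_pos_iff.1 hpos).isUnit
    rw [← hg] at hm hE
    have hgen := mem_zpowers_of_orderOf_eq_card (g := g)
      (by rw [← orderOf_units, hm, Nat.card_eq_fintype_card, ZMod.card_units_eq_totient])
    exact X_pow_sub_C_dvd_of_forall_isRoot (Nat.cast_ne_zero.2 (totient_div_two_ne_zero hN2))
      (neg_ne_zero.2 one_ne_zero) fun _ ↦ isRoot_charPoly_of_pow_eq_neg_one hN hN2 hgen hE
  have hlt := natDegree_lt_natDegree_of_dvd_of_isRoot E.charPoly_monic.ne_zero hdvd hone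
    (by norm_num)
  rwa [natDegree_X_pow_sub_C, natDegree_eq_of_degree_eq_some E.charPoly_degree_eq_order] at hlt

/-- **Minimality part of the minimal-lifting-dimension theorem for Diffie–Hellman.**
For `p` an odd prime with `p > 3`, `m` a primitive root modulo `p`, and `x k = m ^ k % p`,
there is no coefficient vector `α : Fin ((p-1)/2) → ℝ` such that
`x (k + (p-1)/2) = ∑ j, α j * x (k + j)` for all `k`; i.e. no exact linear
time-invariant representation of dimension `(p-1)/2` (or smaller) exists. -/
theorem dh_no_smaller_linear_recurrence (p m : ℕ) (hp : p.Prime) (hp3 : 3 < p)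
    (hm : orderOf (m : ZMod p) = p - 1) :
    ¬ ∃ α : Fin ((p - 1) / 2) → ℝ, ∀ k : ℕ,
      ((m ^ (k + (p - 1) / 2) % p : ℕ) : ℝ)
        = ∑ j : Fin ((p - 1) / 2), α j * ((m ^ (k + (j : ℕ)) % p : ℕ) : ℝ) := by
  rintro ⟨α, hα⟩
  rw [← Nat.totient_prime hp] at hm
  have h := dh_no_smaller_linear_recurrence_general hp.isPrimePow (by lia) hm
    (E := ⟨(p - 1) / 2, fun j ↦ (α j : ℂ)⟩) fun k ↦ by simpa using mod_cast hα k
  rw [Nat.totient_prime hp] at h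
  exact h.false
end

section
/- Let p₁ and p₂ be two distinct odd primes, set p = p₁·p₂, let m be an integer with 1 < m < p coprime to p, and define x : ℕ → ℕ by x k = m^k % p. Let λ(p) = Monoid.exponent (ZMod p)ˣ. For any natural numbers q and N, let Z be the real (q+1) × N matrix with entries Z (j, k) = x (k + j). Then the rank of Z is at most λ(p). -/
/-!
Powers of a unit `u` of `ZMod n` repeat with period `orderOf u`, and so do their residues. Hence
column `k` of the data matrix equals column `k % orderOf u`, and at most `orderOf u ≤ λ(n)`
columns are distinct.
-/

theorem matrix_rank_le_of_periodic_columns {R ι κ : Type*} [CommSemiring R]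
    [StrongRankCondition R] [Fintype κ] {v : ℕ → ι → R} {c : ℕ}
    (hv : Function.Periodic v c) (hc : 0 < c) (t : κ → ℕ) :
    (Matrix.of fun i k => v (t k) i).rank ≤ c := by
  let firstPeriod : Matrix ι (Fin c) R := Matrix.of fun i k => v k i
  have columns_repeat : (Matrix.of fun i k => v (t k) i) =
      firstPeriod.submatrix id fun k => ⟨t k % c, Nat.mod_lt _ hc⟩ := by
    ext i k
    exact (congrFun (hv.map_mod_nat (t k)) i).symm
  calc
    (Matrix.of fun i k => v (t k) i).rank
        = (firstPeriod.submatrix id fun k => ⟨t k % c, Nat.mod_lt _ hc⟩).rank := by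
      rw [columns_repeat]
    _ ≤ firstPeriod.rank := firstPeriod.rank_submatrix_le _ _
    _ ≤ Fintype.card (Fin c) := firstPeriod.rank_le_card_width
    _ = c := Fintype.card_fin c

theorem periodic_pow_mod_orderOf (m n : ℕ) :
    Function.Periodic (fun k => m ^ k % n) (orderOf (m : ZMod n)) := by
  intro k
  apply (ZMod.natCast_eq_natCast_iff' _ _ n).mp
  push_cast
  rw [pow_add, pow_orderOf_eq_one, mul_one]

theorem rsa_data_matrix_rank_le_general (R : Type*) [CommSemiring R] [StrongRankCondition R]
    {m n : ℕ} [NeZero n] (hcop : m.Coprime n) (q N : ℕ) :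
    (Matrix.of fun (j : Fin q) (k : Fin N) =>
      ((m ^ ((k : ℕ) + (j : ℕ)) % n : ℕ) : R)).rank ≤ orderOf (ZMod.unitOfCoprime m hcop) := by
  have columns_periodic : Function.Periodic
      (fun k (j : Fin q) => ((m ^ (k + (j : ℕ)) % n : ℕ) : R))
      (orderOf (ZMod.unitOfCoprime m hcop)) := by
    rw [← orderOf_units, ZMod.coe_unitOfCoprime]
    intro k
    ext j
    dsimp only
    rw [add_right_comm]
    exact congrArg Nat.cast (periodic_pow_mod_orderOf m n (k + j))
  exact matrix_rank_le_of_periodic_columns columns_periodic (orderOf_pos _) Fin.val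

/-- **Rank bound on the EDMD data matrix for RSA.**
Let `p₁, p₂` be distinct odd primes, `p = p₁ * p₂`, `m` an integer with `1 < m < p`
coprime to `p`, and `x k = m ^ k % p`. For any `q` and `N`, the real `(q+1) × N`
matrix `Z` with entries `Z j k = x (k + j)` has rank at most
`λ(p) = Monoid.exponent (ZMod p)ˣ`. -/
theorem rsa_data_matrix_rank_le (p₁ p₂ m q N : ℕ)
    (hp₁ : p₁.Prime) (hp₂ : p₂.Prime) (hodd₁ : Odd p₁) (hodd₂ : Odd p₂) (hne : p₁ ≠ p₂)
    (hm1 : 1 < m) (hmp : m < p₁ * p₂) (hcop : Nat.Coprime m (p₁ * p₂)) :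
    (Matrix.of (fun (j : Fin (q + 1)) (k : Fin N) =>
      ((m ^ ((k : ℕ) + (j : ℕ)) % (p₁ * p₂) : ℕ) : ℝ))).rank
      ≤ Monoid.exponent (ZMod (p₁ * p₂))ˣ := by
  have : NeZero (p₁ * p₂) := ⟨mul_ne_zero hp₁.ne_zero hp₂.ne_zero⟩
  exact (rsa_data_matrix_rank_le_general ℝ hcop (q + 1) N).trans
    (Monoid.orderOf_le_exponent .of_finite _)
end
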